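/- arXiv:2312.11906 — 3 statements merged into one kernel-verified Lean document; each statement's English description precedes it below -/
import Mathlib

section
/- In the Morel-relation setting, for every a ∈ Aˣ one has ⟨a⟩*⟨a⁻¹⟩ = 1 in R; in particular each ⟨a⟩ is invertible in R with inverse ⟨a⁻¹⟩, and ⟨-1⟩² = 1. -/
/-!
Since `η` commutes with the symbols, `⟨·⟩` turns Morel's twisted additivity into multiplicativity,
and the relation `η * (2 + η * [-1]) = 0` makes `⟨-1⟩` an involution. Hence
`⟨1⟩ = ⟨-1⟩ * ⟨-1⟩ = 1`, so `⟨·⟩` is a monoid homomorphism and sends inverse pairs to inverse pairs.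
-/

/-- The Milnor–Witt class `⟨a⟩ = 1 + η * [a]`, where `s a` stands for the symbol `[a]`. -/
def angle {M R : Type*} [Ring R] (η : R) (s : M → R) (a : M) : R :=
  1 + η * s a

section Angle

variable {M R : Type*} [Ring R] {η : R} {s : M → R}

theorem angle_mul [Mul M] {a b : M} (symbol_mul : s (a * b) = s a + s b + η * s a * s b)
    (comm : Commute η (s a)) :
    angle η s (a * b) = angle η s a * angle η s b := by
  have eta_move : η * s a * (η * s b) = η * (η * s a * s b) := by
    rw [← mul_assoc, mul_assoc η (s a) η, ← comm.eq, mul_assoc η (η * s a) (s b)]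
  calc 1 + η * s (a * b)
      = 1 + η * s a + η * s b + η * (η * s a * s b) := by rw [symbol_mul]; noncomm_ring
    _ = 1 + η * s a + η * s b + η * s a * (η * s b) := by rw [eta_move]
    _ = (1 + η * s a) * (1 + η * s b) := by noncomm_ring

theorem angle_mul_self {e : M} (comm : Commute η (s e)) (hyperbolic : η * (2 + η * s e) = 0) :
    angle η s e * angle η s e = 1 := by
  calc (1 + η * s e) * (1 + η * s e)
      = 1 + 2 * (η * s e) + η * (s e * η) * s e := by noncomm_ring
    _ = 1 + 2 * (η * s e) + η * (η * s e) * s e := by rw [comm.eq]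
    _ = 1 + η * (2 + η * s e) * s e := by noncomm_ring
    _ = 1 := by rw [hyperbolic, zero_mul, add_zero]

variable [Monoid M]

theorem angle_one {e : M} (he : e * e = 1)
    (symbol_mul : s (e * e) = s e + s e + η * s e * s e)
    (comm : Commute η (s e)) (hyperbolic : η * (2 + η * s e) = 0) :
    angle η s 1 = 1 := by
  rw [← he, angle_mul symbol_mul comm, angle_mul_self comm hyperbolic]

/-- The class `a ↦ ⟨a⟩` as a monoid homomorphism. Morel's relations are imposed on a monoid `M`
with a chosen square root `e` of `1` in the role of `-1`. -/
def angleHom {e : M} (he : e * e = 1)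
    (symbol_mul : ∀ a b, s (a * b) = s a + s b + η * s a * s b)
    (comm : ∀ a, Commute η (s a)) (hyperbolic : η * (2 + η * s e) = 0) : M →* R where
  toFun := angle η s
  map_one' := angle_one he (symbol_mul e e) (comm e) hyperbolic
  map_mul' a b := angle_mul (symbol_mul a b) (comm a)

end Angle

theorem angle_invertible_general {G R : Type*} [Group G] [Ring R] {η : R} {s : G → R} {e : G}
    (he : e * e = 1)
    (symbol_mul : ∀ a b, s (a * b) = s a + s b + η * s a * s b)
    (comm : ∀ a, Commute η (s a)) (hyperbolic : η * (2 + η * s e) = 0) :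
    (∀ a, angle η s a * angle η s a⁻¹ = 1) ∧
    (∀ a, angle η s a⁻¹ * angle η s a = 1) ∧
    angle η s e * angle η s e = 1 :=
  let φ := angleHom he symbol_mul comm hyperbolic
  ⟨fun a => map_mul_eq_one φ (mul_inv_cancel a), fun a => map_mul_eq_one φ (inv_mul_cancel a),
    angle_mul_self (comm e) hyperbolic⟩

/-- Morel-relation setting: `⟨a⟩*⟨a⁻¹⟩ = 1`; in particular each `⟨a⟩` is
invertible in `R` with inverse `⟨a⁻¹⟩`, and `⟨-1⟩² = 1`. -/
theorem angle_invertible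
    {A R : Type*} [CommRing A] [Ring R]
    (η : R) (s : Aˣ → R)
    (rel1 : ∀ a b : Aˣ, s (a * b) = s a + s b + η * s a * s b)
    (rel2 : ∀ a : Aˣ, η * s a = s a * η)
    (rel3 : η * (2 + η * s (-1)) = 0) :
    (∀ a : Aˣ, (1 + η * s a) * (1 + η * s a⁻¹) = 1) ∧
    (∀ a : Aˣ, (1 + η * s a⁻¹) * (1 + η * s a) = 1) ∧
    (1 + η * s (-1)) * (1 + η * s (-1)) = 1 :=
  angle_invertible_general (by rw [neg_mul_neg, one_mul]) rel1 rel2 rel3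
end

section
/- In the Morel-relation setting, let a ∈ Aˣ be a unit such that 1 − a is also a unit of A. If the two Steinberg relations [a]*[1−a] = 0 and [a⁻¹]*[1−a⁻¹] = 0 hold in R, then [a]*[−a] = 0 in R. (This is the algebraic key step in the proof of Lemma A.2 of the paper, showing [t][−t] = 0 in the Milnor–Witt K-theory of S[t, t⁻¹, (1−t)⁻¹].) -/
/-!
Since `1 - a = (-a) * (1 - a⁻¹)`, expanding `[1 - a]` turns `[a] * [1 - a] = 0` into
`[a] * [-a] = 0` as soon as `[a] * [1 - a⁻¹] = 0`. The latter follows from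
`[a⁻¹] * [1 - a⁻¹] = 0` by expanding `[a * a⁻¹] = [1] = 0`. To see that `[1] = 0`, expand
`[b * 1]` to get `[1] = -η * [b] * [1]` for every `b`; using this for `b = a` and then for
`b = 1 - a` gives `[1] = η ^ 2 * [a] * [1 - a] * [1] = 0`.
-/

section Symbol

variable {G R : Type*} [NonUnitalRing R] {η : R} {s : G → R}

theorem eta_mul_symbol_mul_symbol_comm [Mul G]
    (symbol_mul : ∀ a b : G, s (a * b) = s a + s b + η * s a * s b)
    {a b : G} (hab : Commute a b) :
    η * s a * s b = η * s b * s a := by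
  have h : s a + s b + η * s a * s b = s a + s b + η * s b * s a := by
    rw [← symbol_mul, hab.eq, symbol_mul, add_comm (s b)]
  exact add_left_cancel h

theorem eta_mul_symbol_mul_symbol_one [MulOneClass G]
    (symbol_mul : ∀ a b : G, s (a * b) = s a + s b + η * s a * s b) (a : G) :
    η * s a * s 1 = -s 1 := by
  have h : s a = s a + (s 1 + η * s a * s 1) := by
    rw [← add_assoc, ← symbol_mul, mul_one]
  exact eq_neg_of_add_eq_zero_right (left_eq_add.mp h)

theorem symbol_one_eq_zero_of_symbol_mul_symbol_eq_zero [MulOneClass G]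
    (symbol_mul : ∀ a b : G, s (a * b) = s a + s b + η * s a * s b)
    {a b : G} (hη : Commute η (s a)) (hab : s a * s b = 0) :
    s 1 = 0 := by
  calc
    s 1 = η * s a * (η * s b * s 1) := by
      rw [eta_mul_symbol_mul_symbol_one symbol_mul b, mul_neg,
        eta_mul_symbol_mul_symbol_one symbol_mul a, neg_neg]
    _ = η * (s a * η) * s b * s 1 := by simp only [mul_assoc]
    _ = η * η * (s a * s b) * s 1 := by rw [← hη.eq]; simp only [mul_assoc]
    _ = 0 := by rw [hab, mul_zero, zero_mul]

theorem symbol_mul_eq_zero_of_symbol_inv_mul_eq_zero [Group G]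
    (symbol_mul : ∀ a b : G, s (a * b) = s a + s b + η * s a * s b) (symbol_one : s 1 = 0)
    {a : G} {x : R} (hx : s a⁻¹ * x = 0) :
    s a * x = 0 := by
  calc
    s a * x = (s a + s a⁻¹ + η * s a * s a⁻¹) * x := by
      rw [add_mul, add_mul, mul_assoc _ (s a⁻¹), hx, mul_zero, add_zero, add_zero]
    _ = 0 := by rw [← symbol_mul, mul_inv_cancel, symbol_one, zero_mul]

theorem symbol_mul_symbol_eq_zero_of_symbol_mul_symbol_mul_eq_zero [Mul G]
    (symbol_mul : ∀ a b : G, s (a * b) = s a + s b + η * s a * s b)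
    {a b c : G} (hη : Commute η (s a)) (hbc : Commute b c)
    (hac : s a * s c = 0) (habc : s a * s (b * c) = 0) :
    s a * s b = 0 := by
  have cross_term : s a * (η * s b * s c) = 0 := by
    calc
      s a * (η * s b * s c) = s a * (η * s c * s b) := by
        rw [eta_mul_symbol_mul_symbol_comm symbol_mul hbc]
      _ = s a * η * s c * s b := by simp only [mul_assoc]
      _ = η * (s a * s c) * s b := by rw [← hη.eq, mul_assoc η]
      _ = 0 := by rw [hac, mul_zero, zero_mul]
  rwa [symbol_mul, mul_add, mul_add, hac, cross_term, add_zero, add_zero] at habc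

end Symbol

section Units

variable {A : Type*} [Ring A] {a v : Aˣ}

theorem val_neg_mul_eq_one_sub (hv : (v : A) = 1 - ((a⁻¹ : Aˣ) : A)) :
    ((-a * v : Aˣ) : A) = 1 - (a : A) := by
  rw [Units.val_mul, Units.val_neg, hv, mul_sub, mul_one, neg_mul, Units.mul_inv]
  abel

theorem commute_neg_of_val_eq_one_sub_inv (hv : (v : A) = 1 - ((a⁻¹ : Aˣ) : A)) :
    Commute (-a) v := by
  have h : Commute (a : A) v := by
    rw [hv]
    exact (Commute.one_right _).sub_right (Commute.refl a).inv_right.units_val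
  exact (Commute.units_of_val h).neg_left

end Units

theorem symbol_mul_symbol_neg_eq_zero_general
    {A R : Type*} [Ring A] [NonUnitalRing R]
    {η : R} {s : Aˣ → R}
    (symbol_mul : ∀ a b : Aˣ, s (a * b) = s a + s b + η * s a * s b)
    {a u v : Aˣ} (hη : Commute η (s a))
    (hu : (u : A) = 1 - (a : A))
    (hv : (v : A) = 1 - ((a⁻¹ : Aˣ) : A))
    (steinberg₁ : s a * s u = 0)
    (steinberg₂ : s a⁻¹ * s v = 0) :
    s a * s (-a) = 0 := by
  have symbol_one : s 1 = 0 :=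
    symbol_one_eq_zero_of_symbol_mul_symbol_eq_zero symbol_mul hη steinberg₁
  have symbol_mul_symbol_v : s a * s v = 0 :=
    symbol_mul_eq_zero_of_symbol_inv_mul_eq_zero symbol_mul symbol_one steinberg₂
  have u_eq : u = -a * v := Units.ext (hu.trans (val_neg_mul_eq_one_sub hv).symm)
  exact symbol_mul_symbol_eq_zero_of_symbol_mul_symbol_mul_eq_zero symbol_mul hη
    (commute_neg_of_val_eq_one_sub_inv hv) symbol_mul_symbol_v (u_eq ▸ steinberg₁)

/-- Morel-relation setting: if `a` and `1 − a` are units and the two Steinberg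
relations `[a]*[1−a] = 0` and `[a⁻¹]*[1−a⁻¹] = 0` hold, then `[a]*[−a] = 0`. -/
theorem symbol_mul_symbol_neg_eq_zero
    {A R : Type*} [CommRing A] [Ring R]
    (η : R) (s : Aˣ → R)
    (rel1 : ∀ a b : Aˣ, s (a * b) = s a + s b + η * s a * s b)
    (rel2 : ∀ a : Aˣ, η * s a = s a * η)
    (rel3 : η * (2 + η * s (-1)) = 0)
    (a u v : Aˣ)
    (hu : (u : A) = 1 - (a : A))
    (hv : (v : A) = 1 - ((a⁻¹ : Aˣ) : A))
    (steinberg₁ : s a * s u = 0)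
    (steinberg₂ : s a⁻¹ * s v = 0) :
    s a * s (-a) = 0 :=
  symbol_mul_symbol_neg_eq_zero_general rel1 (rel2 a) hu hv steinberg₁ steinberg₂
end

section
/- In the Morel-relation setting with the additional relation [c]*[−c] = 0 for all c ∈ Aˣ, for all a, b ∈ Aˣ one has [a]*[b] = −⟨−1⟩*[b]*[a] in R; equivalently [a]*[b] = (−1)_ε*[b]*[a], where (−1)_ε = −⟨−1⟩. (Algebraic form of Corollary A.5 of the paper, the ε-anticommutativity of symbols.) -/
/-- For `ε` in a ring `R` with `ε² = 1` and `m : ℤ`,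
`m_ε = ⌈m/2⌉·1 + ⌊m/2⌋·ε`. -/
noncomputable def mEps {R : Type*} [Ring R] (ε : R) (m : ℤ) : R :=
  (⌈(m : ℚ) / 2⌉ : ℤ) • (1 : R) + (⌊(m : ℚ) / 2⌋ : ℤ) • ε

/-!
Let `t = -1`, or more generally any element with `[c][tc] = 0` for all `c`. Since
`[t] = [a] + ⟨a⟩[ta⁻¹]` and `0 = [1] = [a] + ⟨a⟩[a⁻¹]`, multiplying the relation `[a⁻¹][ta⁻¹] = 0`
by `⟨a⟩²` gives `[a]² = [a][t]`. Polarizing this identity, that is, expanding it at `ab` and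
cancelling the unit `⟨a⟩`, gives `[a][b] + [b][a] = -η[a][b][t]`. The symbols on the right may be
permuted, because commutativity of the group forces `η[a][b] = η[b][a]`.
-/

theorem mEps_neg_one {R : Type*} [Ring R] (ε : R) : mEps ε (-1) = -ε := by
  have ceil_eq : ⌈((-1 : ℤ) : ℚ) / 2⌉ = 0 := by rw [Int.ceil_eq_iff]; norm_num
  have floor_eq : ⌊((-1 : ℤ) : ℚ) / 2⌋ = -1 := by rw [Int.floor_eq_iff]; norm_num
  rw [mEps, ceil_eq, floor_eq, zero_smul, zero_add, neg_one_smul]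

/-- The class `⟨a⟩ = 1 + η[a]` attached to a symbol map `s = [·]`. -/
def morelForm {G R : Type*} [Ring R] (η : R) (s : G → R) (a : G) : R :=
  1 + η * s a

/-- Morel's relations `[ab] = [a] + [b] + η[a][b]` and `η[a] = [a]η` for a symbol map `s = [·]`
defined on any type with a multiplication, which plays the role of the unit group of a ring. -/
structure IsMorelSymbol {G R : Type*} [Mul G] [Ring R] (η : R) (s : G → R) : Prop where
  map_mul : ∀ a b, s (a * b) = s a + s b + η * s a * s b
  commute_eta : ∀ a, Commute η (s a)

namespace IsMorelSymbol

variable {G R : Type*} [Ring R] {η : R} {s : G → R}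

section Mul

variable [Mul G]

theorem map_mul_eq_add_morelForm_mul (hs : IsMorelSymbol η s) (a b : G) :
    s (a * b) = s a + morelForm η s a * s b := by
  rw [hs.map_mul, morelForm, add_mul, one_mul, add_assoc]

theorem morelForm_mul (hs : IsMorelSymbol η s) (a b : G) :
    morelForm η s (a * b) = morelForm η s a * morelForm η s b := by
  have eta_swap : η * s a * (η * s b) = η * (η * s a * s b) := by
    rw [mul_assoc, (hs.commute_eta a).symm.left_comm, ← mul_assoc η (s a)]
  simp only [morelForm, hs.map_mul, add_mul, mul_add, one_mul, mul_one, eta_swap]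
  abel

end Mul

section CommMagma

variable [CommMagma G]

theorem eta_mul_mul_comm (hs : IsMorelSymbol η s) (a b : G) :
    η * s a * s b = η * s b * s a := by
  have h : s a + s b + η * s a * s b = s a + s b + η * s b * s a := by
    rw [← hs.map_mul, mul_comm, hs.map_mul, add_comm (s b)]
  exact add_left_cancel h

theorem commute_morelForm (hs : IsMorelSymbol η s) (a b : G) :
    Commute (morelForm η s a) (s b) := by
  refine (Commute.one_left _).add_left ?_
  calc η * s a * s b = η * s b * s a := hs.eta_mul_mul_comm a b
    _ = s b * (η * s a) := by rw [(hs.commute_eta b).eq, mul_assoc]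

theorem eta_mul_mul_mul_reverse (hs : IsMorelSymbol η s) (a b c : G) :
    η * s a * s b * s c = η * s c * s b * s a := by
  calc η * s a * s b * s c = s b * (η * s a * s c) := by
        rw [hs.eta_mul_mul_comm a b, (hs.commute_eta b).eq]; simp only [mul_assoc]
    _ = s b * (η * s c * s a) := by rw [hs.eta_mul_mul_comm a c]
    _ = η * s c * s b * s a := by
        rw [hs.eta_mul_mul_comm c b, (hs.commute_eta b).eq]; simp only [mul_assoc]

end CommMagma

theorem map_one [CommMonoid G] {t : G} (hs : IsMorelSymbol η s) (ht : s 1 * s t = 0) :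
    s 1 = 0 := by
  have morelForm_mul_map_one : morelForm η s t * s 1 = 0 := by
    simpa using hs.map_mul_eq_add_morelForm_mul t 1
  calc s 1 = s 1 + η * s 1 * s t := by rw [mul_assoc, ht, mul_zero, add_zero]
    _ = morelForm η s t * s 1 := by rw [hs.eta_mul_mul_comm, morelForm, add_mul, one_mul]
    _ = 0 := morelForm_mul_map_one

section CommGroup

variable [CommGroup G]

theorem isLeftRegular_morelForm (hs : IsMorelSymbol η s) (h_one : s 1 = 0) (a : G) :
    IsLeftRegular (morelForm η s a) := by
  refine isLeftRegular_of_mul_eq_one (b := morelForm η s a⁻¹) ?_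
  rw [← hs.morelForm_mul, inv_mul_cancel, morelForm, h_one, mul_zero, add_zero]

variable {t : G}

theorem mul_self_eq_mul (hs : IsMorelSymbol η s) (ht : ∀ c, s c * s (t * c) = 0) (a : G) :
    s a * s a = s a * s t := by
  have h_one : s 1 = 0 := hs.map_one (t := t) (by simpa using ht 1)
  have map_inv : morelForm η s a * s a⁻¹ = -s a := by
    rw [eq_neg_iff_add_eq_zero, add_comm, ← hs.map_mul_eq_add_morelForm_mul, mul_inv_cancel, h_one]
  have map_mul_inv : morelForm η s a * s (t * a⁻¹) = s t - s a := by
    rw [eq_sub_iff_add_eq', ← hs.map_mul_eq_add_morelForm_mul, mul_left_comm, mul_inv_cancel,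
      mul_one]
  have h : -s a * (s t - s a) = 0 := by
    rw [← map_inv, ← map_mul_inv, (hs.commute_morelForm a a⁻¹).symm.mul_mul_mul_comm, ht, mul_zero]
  rw [neg_mul, neg_eq_zero, mul_sub, sub_eq_zero] at h
  exact h.symm

theorem mul_add_mul_swap (hs : IsMorelSymbol η s) (ht : ∀ c, s c * s (t * c) = 0) (a b : G) :
    s a * s b + s b * s a = -(η * s a * s b * s t) := by
  have h_one : s 1 = 0 := hs.map_one (t := t) (by simpa using ht 1)
  have polarized : morelForm η s a * (s a * s b + s b * s a + morelForm η s a * (s b * s b)) =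
      morelForm η s a * (s b * s t) := by
    have h := hs.mul_self_eq_mul ht (a * b)
    rw [hs.map_mul_eq_add_morelForm_mul, add_mul _ _ (s t), ← hs.mul_self_eq_mul ht a] at h
    have cross : s a * (morelForm η s a * s b) = morelForm η s a * (s a * s b) :=
      (hs.commute_morelForm a a).symm.left_comm _
    have square : morelForm η s a * s b * (morelForm η s a * s b) =
        morelForm η s a * (morelForm η s a * (s b * s b)) := by
      rw [mul_assoc, (hs.commute_morelForm a b).symm.left_comm]
    rw [add_mul, mul_add, mul_add, cross, square, add_assoc, add_right_inj, mul_assoc,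
      mul_assoc] at h
    rw [mul_add, mul_add, add_assoc, h]
  have h := hs.isLeftRegular_morelForm h_one a polarized
  simp only [← hs.mul_self_eq_mul ht b, morelForm, add_mul, one_mul] at h
  rw [mul_assoc _ (s b) (s t), ← hs.mul_self_eq_mul ht b, eq_neg_iff_add_eq_zero]
  rwa [add_left_comm, add_eq_left] at h

end CommGroup

end IsMorelSymbol

theorem symbol_eps_anticomm_general {G R : Type*} [CommGroup G] [Ring R] {η : R} {s : G → R}
    {t : G} (hs : IsMorelSymbol η s) (ht : ∀ c, s c * s (t * c) = 0) (a b : G) :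
    s a * s b = -(morelForm η s t * (s b * s a)) ∧
      s a * s b = mEps (morelForm η s t) (-1) * (s b * s a) := by
  have anticomm : s a * s b = -(morelForm η s t * (s b * s a)) := by
    calc s a * s b = -(s b * s a) - η * s a * s b * s t := by
          rw [eq_neg_add_of_add_eq (hs.mul_add_mul_swap ht b a), hs.eta_mul_mul_comm b a,
            sub_eq_add_neg]
      _ = -(s b * s a) - η * s t * s b * s a := by rw [hs.eta_mul_mul_mul_reverse]
      _ = -(morelForm η s t * (s b * s a)) := by
          rw [morelForm, add_mul, one_mul, neg_add', mul_assoc _ (s b)]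
  exact ⟨anticomm, by rw [mEps_neg_one, neg_mul, ← anticomm]⟩

/-- Morel-relation setting with `[c]*[−c] = 0` for all units `c`:
`[a]*[b] = −⟨−1⟩*[b]*[a]`, equivalently `[a]*[b] = (−1)_ε*[b]*[a]`. -/
theorem symbol_eps_anticomm
    {A R : Type*} [CommRing A] [Ring R]
    (η : R) (s : Aˣ → R)
    (rel1 : ∀ a b : Aˣ, s (a * b) = s a + s b + η * s a * s b)
    (rel2 : ∀ a : Aˣ, η * s a = s a * η)
    (rel3 : η * (2 + η * s (-1)) = 0)
    (hsn : ∀ c : Aˣ, s c * s (-c) = 0) :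
    ∀ a b : Aˣ,
      s a * s b = -((1 + η * s (-1)) * (s b * s a)) ∧
      s a * s b = mEps (1 + η * s (-1)) (-1) * (s b * s a) :=
  symbol_eps_anticomm_general ⟨rel1, rel2⟩ fun c => by rw [neg_one_mul, hsn]
end
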